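/- A unary query over ordered unranked Σ-trees is definable in MSO if and only if it is definable in monadic datalog over the extensional predicates ≺_fc (first child), ≺_ns (next sibling), Leaf, LastChild, Root, and P_a for a ∈ Σ. -/

import Mathlib

/-!
The least fixed point of a datalog program is the intersection of the families of sets which are
closed under its rules, so it is expressed by universal set quantifiers; the extensional
predicates are definable from the two orders.

Conversely, the first-child/next-sibling encoding turns an unranked tree into a binary tree on the
same nodes. By induction on an MSO formula, a finite deterministic bottom-up automaton decides it
on the encodings of trees in which the values of the variables are marked. A node quantifier is a
set quantifier over singletons, and a set quantifier is a projection, treated by the subset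
construction. Given an automaton for a unary query, where the queried node is marked, datalog
computes bottom-up the states reached on the unmarked forests below and to the right of every
node, and then top-down, for every node, the states from which the rest of the tree, without
marks, leads to acceptance. A node is selected if marking it yields such a state.
-/

namespace UnrankedTrees

/-! ### Unranked trees: tree domains and ordered unranked Σ-trees.
Nodes are finite strings over ℕ; a tree domain is a finite prefix-closed set
of nodes such that `s ++ [i] ∈ D` implies `s ++ [j] ∈ D` for all `j < i`. -/

abbrev Node : Type := List ℕ

/-- An ordered unranked tree over alphabet `A`: a tree domain with a labeling. -/
structure UTree (A : Type) where
  dom : Finset Node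
  nil_mem : ([] : Node) ∈ dom
  prefix_closed : ∀ ⦃s t : Node⦄, s ∈ dom → t <+: s → t ∈ dom
  sib_closed : ∀ ⦃s : Node⦄ ⦃i j : ℕ⦄, s ++ [i] ∈ dom → j < i → s ++ [j] ∈ dom
  label : Node → A

namespace UTree

variable {A : Type}

/-- The child relation `≺_ch`. -/
def childR (T : UTree A) (s t : Node) : Prop :=
  s ∈ T.dom ∧ t ∈ T.dom ∧ ∃ i : ℕ, t = s ++ [i]

/-- The descendant-or-self relation `≺*_ch` (the prefix relation). -/
def descR (T : UTree A) (s t : Node) : Prop :=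
  s ∈ T.dom ∧ t ∈ T.dom ∧ s <+: t

/-- The next-sibling relation `≺_ns`. -/
def nsR (T : UTree A) (s t : Node) : Prop :=
  s ∈ T.dom ∧ t ∈ T.dom ∧ ∃ (u : Node) (i : ℕ), s = u ++ [i] ∧ t = u ++ [i + 1]

/-- The sibling ordering `≺*_ns` (reflexive-transitive closure of next-sibling). -/
def sibR (T : UTree A) (s t : Node) : Prop :=
  s ∈ T.dom ∧ t ∈ T.dom ∧ ∃ (u : Node) (i j : ℕ), s = u ++ [i] ∧ t = u ++ [j] ∧ i ≤ j

/-- The first-child relation `≺_fc`. -/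
def firstChildR (T : UTree A) (s t : Node) : Prop :=
  s ∈ T.dom ∧ t ∈ T.dom ∧ t = s ++ [0]

/-- The number of children of a node. -/
noncomputable def childCount (T : UTree A) (s : Node) : ℕ :=
  Set.ncard {i : ℕ | s ++ [i] ∈ T.dom}

/-- The list of children of a node `s`, in sibling order: `s·0, …, s·(n-1)`. -/
noncomputable def childrenList (T : UTree A) (s : Node) : List Node :=
  (List.range (T.childCount s)).map fun i => s ++ [i]

/-- `s` is a leaf of `T`. -/
def isLeaf (T : UTree A) (s : Node) : Prop :=
  s ∈ T.dom ∧ ∀ i : ℕ, s ++ [i] ∉ T.dom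

/-- `s` has no next sibling in `T` (the root also counts as "last"). -/
def isLast (T : UTree A) (s : Node) : Prop :=
  s = [] ∨ ∃ (u : Node) (i : ℕ), s = u ++ [i] ∧ u ++ [i + 1] ∉ T.dom

end UTree

/-! ### MSO over ordered unranked trees.
First-order variables and monadic second-order variables are indexed by ℕ.
First-order quantifiers range over the nodes of the tree, set quantifiers over
sets of nodes of the tree. -/

inductive MSO (A : Type) : Type where
  | eq : ℕ → ℕ → MSO A
  | desc : ℕ → ℕ → MSO A               -- x ≺*_ch y
  | sib : ℕ → ℕ → MSO A                -- x ≺*_ns y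
  | lab : A → ℕ → MSO A                -- P_a(x)
  | mem : ℕ → ℕ → MSO A                -- X(x)
  | not : MSO A → MSO A
  | and : MSO A → MSO A → MSO A
  | exFO : ℕ → MSO A → MSO A
  | exSO : ℕ → MSO A → MSO A

namespace MSO

variable {A : Type}

def Sat (T : UTree A) (v : ℕ → Node) (V : ℕ → Set Node) : MSO A → Prop
  | .eq x y => v x = v y
  | .desc x y => T.descR (v x) (v y)
  | .sib x y => T.sibR (v x) (v y)
  | .lab a x => v x ∈ T.dom ∧ T.label (v x) = a
  | .mem X x => v x ∈ V X
  | .not φ => ¬ Sat T v V φ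
  | .and φ ψ => Sat T v V φ ∧ Sat T v V ψ
  | .exFO n φ => ∃ s ∈ T.dom, Sat T (Function.update v n s) V φ
  | .exSO n φ => ∃ S : Set Node, S ⊆ ↑T.dom ∧ Sat T v (Function.update V n S) φ

/-- `φ`, as a sentence, defines the set `L` of trees.  (Quantifying over all
valuations forces the truth value to be independent of the valuation, i.e.
`φ` behaves as a sentence.) -/
def DefinesB (φ : MSO A) (L : Set (UTree A)) : Prop :=
  ∀ (T : UTree A) (v : ℕ → Node) (V : ℕ → Set Node), T ∈ L ↔ Sat T v V φ

/-- `φ`, as a formula whose only free variable is the first-order variable `0`,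
defines the unary query `Q`. -/
def DefinesU (φ : MSO A) (Q : UTree A → Set Node) : Prop :=
  ∀ (T : UTree A) (v : ℕ → Node) (V : ℕ → Set Node) (s : Node), s ∈ T.dom →
    (s ∈ Q T ↔ Sat T (Function.update v 0 s) V φ)

end MSO

/-! ### Monadic datalog over unranked trees. -/

/-- Atoms of monadic datalog programs: extensional predicates
`≺_fc`, `≺_ns`, `Leaf`, `LastChild`, `Root`, `P_a`, plus unary intensional
predicates drawn from `I`; variables are indexed by ℕ. -/
inductive DAtom (A I : Type) : Type where
  | fc : ℕ → ℕ → DAtom A I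
  | ns : ℕ → ℕ → DAtom A I
  | leaf : ℕ → DAtom A I
  | lastChild : ℕ → DAtom A I
  | root : ℕ → DAtom A I
  | lab : A → ℕ → DAtom A I
  | idb : I → ℕ → DAtom A I

namespace DAtom

variable {A I : Type}

def vars : DAtom A I → List ℕ
  | .fc x y => [x, y]
  | .ns x y => [x, y]
  | .leaf x => [x]
  | .lastChild x => [x]
  | .root x => [x]
  | .lab _ x => [x]
  | .idb _ x => [x]

/-- `LastChild` holds of `s·i` when `s·(i+1)` is not in the domain. -/
def lastChildP (T : UTree A) (s : Node) : Prop :=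
  s ∈ T.dom ∧ ∃ (u : Node) (i : ℕ), s = u ++ [i] ∧ u ++ [i + 1] ∉ T.dom

/-- Satisfaction of the extensional part of an atom (intensional atoms are
handled separately in the fixed-point semantics). -/
def ExtHolds (T : UTree A) (σ : ℕ → Node) : DAtom A I → Prop
  | .fc x y => T.firstChildR (σ x) (σ y)
  | .ns x y => T.nsR (σ x) (σ y)
  | .leaf x => T.isLeaf (σ x)
  | .lastChild x => lastChildP T (σ x)
  | .root x => σ x = []
  | .lab a x => σ x ∈ T.dom ∧ T.label (σ x) = a
  | .idb _ _ => True

end DAtom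

/-- A monadic datalog rule `H(x) :− P₁, …, P_k`: all intensional predicates
are unary; the head variable must occur in the body. -/
structure DRule (A I : Type) where
  headPred : I
  headVar : ℕ
  body : List (DAtom A I)
  headVar_mem : ∃ a ∈ body, headVar ∈ a.vars

/-- Least-fixed-point semantics of a monadic datalog program, as inductive
derivability of intensional facts. -/
inductive Derives {A I : Type} (T : UTree A) (P : List (DRule A I)) : I → Node → Prop where
  | step (r : DRule A I) (hr : r ∈ P) (σ : ℕ → Node) (hσ : ∀ n, σ n ∈ T.dom)
      (hext : ∀ a ∈ r.body, DAtom.ExtHolds T σ a)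
      (hidb : ∀ (i : I) (y : ℕ), DAtom.idb i y ∈ r.body → Derives T P i (σ y)) :
      Derives T P r.headPred (σ r.headVar)

/-! ### The extensional predicates in terms of the two orders -/

namespace UTree

variable {A : Type} (T : UTree A) {s t : Node}

/-- `t` covers `s` in the relation `R` on the nodes of `T`, as for the cover relation `⋖`
of an order. -/
def Covers (R : Node → Node → Prop) (s t : Node) : Prop :=
  R s t ∧ s ≠ t ∧ ∀ z ∈ T.dom, R s z → R z t → z = s ∨ z = t

/-- `s` is a maximal node of `T` in the relation `R`. The conjunct `R s s` says that `s` lies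
in the field of `R`; it excludes the root from the maximal elements of the sibling order. -/
def IsMaximal (R : Node → Node → Prop) (s : Node) : Prop :=
  R s s ∧ ∀ z ∈ T.dom, R s z → z = s

variable {T}

lemma sibR_append_singleton {u w : Node} {i j : ℕ} :
    T.sibR (u ++ [i]) (w ++ [j]) ↔ u ++ [i] ∈ T.dom ∧ u ++ [j] ∈ T.dom ∧ w = u ∧ i ≤ j := by
  simp only [sibR, List.append_singleton_inj]
  constructor
  · rintro ⟨hi, hj, u, i, j, ⟨rfl, rfl⟩, ⟨rfl, rfl⟩, hij⟩
    exact ⟨hi, hj, rfl, hij⟩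
  · rintro ⟨hi, hj, rfl, hij⟩
    exact ⟨hi, hj, w, i, j, ⟨rfl, rfl⟩, ⟨rfl, rfl⟩, hij⟩

lemma not_sibR_nil_left : ¬ T.sibR [] t := by
  simp [sibR]

lemma not_sibR_nil_right : ¬ T.sibR s [] := by
  simp [sibR]

lemma mem_dom_of_append_mem {u w : Node} (h : u ++ w ∈ T.dom) : u ∈ T.dom :=
  T.prefix_closed h (List.prefix_append u w)

lemma append_singleton_mem_of_le {u : Node} {i j : ℕ} (h : u ++ [j] ∈ T.dom) (hij : i ≤ j) :
    u ++ [i] ∈ T.dom :=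
  hij.eq_or_lt.elim (fun hij => hij ▸ h) (T.sib_closed h)

lemma childR_iff_covers : T.childR s t ↔ T.Covers T.descR s t := by
  constructor
  · rintro ⟨hs, ht, i, rfl⟩
    refine ⟨⟨hs, ht, List.prefix_append _ _⟩, by simp, ?_⟩
    rintro z - ⟨-, -, hsz⟩ ⟨-, -, hzt⟩
    rcases List.prefix_concat_iff.1 hzt with hzt | hzt
    · exact Or.inr hzt
    · exact Or.inl (hzt.eq_of_length_le hsz.length_le)
  · rintro ⟨⟨hs, ht, w, rfl⟩, hne, hcov⟩
    obtain _ | ⟨i, w⟩ := w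
    · simp at hne
    have hi : s ++ [i] ∈ T.dom := mem_dom_of_append_mem (w := w) (by simpa using ht)
    obtain h | h := hcov _ hi ⟨hs, hi, List.prefix_append _ _⟩ ⟨hi, ht, w, by simp⟩
    · simp at h
    · exact ⟨hs, ht, i, h.symm⟩

lemma firstChildR_iff : T.firstChildR s t ↔ T.childR s t ∧ T.IsMaximal (flip T.sibR) t := by
  constructor
  · rintro ⟨hs, ht, rfl⟩
    refine ⟨⟨hs, ht, 0, rfl⟩, sibR_append_singleton.2 ⟨ht, ht, rfl, le_rfl⟩, fun z _ hz => ?_⟩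
    obtain rfl | ⟨u, i, rfl⟩ := z.eq_nil_or_concat'
    · exact (not_sibR_nil_left hz).elim
    · obtain ⟨-, -, rfl, hi⟩ := sibR_append_singleton.1 hz
      rw [Nat.le_zero.1 hi]
  · rintro ⟨⟨hs, ht, i, rfl⟩, -, hmin⟩
    have h0 : s ++ [0] ∈ T.dom := append_singleton_mem_of_le ht (Nat.zero_le i)
    exact ⟨hs, ht, (hmin _ h0 (sibR_append_singleton.2 ⟨h0, ht, rfl, Nat.zero_le i⟩)).symm⟩

lemma nsR_iff_covers : T.nsR s t ↔ T.Covers T.sibR s t := by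
  constructor
  · rintro ⟨hs, ht, u, i, rfl, rfl⟩
    refine ⟨sibR_append_singleton.2 ⟨hs, ht, rfl, i.le_succ⟩, by simp, fun z _ hsz hzt => ?_⟩
    obtain rfl | ⟨w, j, rfl⟩ := z.eq_nil_or_concat'
    · exact (not_sibR_nil_left hzt).elim
    obtain ⟨-, -, rfl, hij⟩ := sibR_append_singleton.1 hsz
    obtain ⟨-, -, -, hji⟩ := sibR_append_singleton.1 hzt
    simp only [List.append_singleton_inj, true_and]
    lia
  · rintro ⟨⟨hs, ht, u, i, j, rfl, rfl, hij⟩, hne, hcov⟩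
    have hlt : i + 1 ≤ j := lt_of_le_of_ne hij (by rintro rfl; exact hne rfl)
    have hi : u ++ [i + 1] ∈ T.dom := append_singleton_mem_of_le ht hlt
    obtain h | h := hcov _ hi (sibR_append_singleton.2 ⟨hs, hi, rfl, i.le_succ⟩)
      (sibR_append_singleton.2 ⟨hi, ht, rfl, hlt⟩)
    · simp at h
    · exact ⟨hs, ht, u, i, rfl, h.symm⟩

lemma isLeaf_iff_isMaximal : T.isLeaf s ↔ T.IsMaximal T.descR s := by
  constructor
  · rintro ⟨hs, hleaf⟩
    refine ⟨⟨hs, hs, List.prefix_rfl⟩, ?_⟩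
    rintro z hz ⟨-, -, _ | ⟨i, w⟩, rfl⟩
    · simp
    · exact absurd (mem_dom_of_append_mem (w := w) (by simpa using hz)) (hleaf i)
  · rintro ⟨⟨hs, -⟩, hmax⟩
    exact ⟨hs, fun i hi => by simpa using hmax _ hi ⟨hs, hi, List.prefix_append _ _⟩⟩

lemma lastChildP_iff_isMaximal : DAtom.lastChildP T s ↔ T.IsMaximal T.sibR s := by
  constructor
  · rintro ⟨hs, u, i, rfl, hlast⟩
    refine ⟨sibR_append_singleton.2 ⟨hs, hs, rfl, le_rfl⟩, fun z _ hz => ?_⟩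
    obtain rfl | ⟨w, j, rfl⟩ := z.eq_nil_or_concat'
    · exact (not_sibR_nil_right hz).elim
    obtain ⟨-, hj, rfl, hij⟩ := sibR_append_singleton.1 hz
    have hji : ¬ i + 1 ≤ j := fun h => hlast (append_singleton_mem_of_le hj h)
    rw [show i = j by lia]
  · rintro ⟨⟨hs, -, u, i, -, rfl, -, -⟩, hmax⟩
    refine ⟨hs, u, i, rfl, fun hi => ?_⟩
    simpa using hmax _ hi (sibR_append_singleton.2 ⟨hs, hi, rfl, i.le_succ⟩)

lemma eq_nil_iff_isMaximal : s = [] ↔ T.IsMaximal (flip T.descR) s := by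
  constructor
  · rintro rfl
    exact ⟨⟨T.nil_mem, T.nil_mem, List.prefix_rfl⟩, fun z _ hz => List.prefix_nil.1 hz.2.2⟩
  · rintro ⟨⟨hs, -⟩, hmin⟩
    exact (hmin [] T.nil_mem ⟨T.nil_mem, hs, List.nil_prefix⟩).symm

end UTree

/-! ### From datalog to MSO -/

lemma forall_update_iff {α : Type*} {D : α → Prop} {v : ℕ → α} {m : ℕ} {l : List ℕ}
    {p : (ℕ → α) → Prop} :
    (∀ s, D s → ∀ σ : ℕ → α, (∀ n ∈ l, D (σ n)) →
      (∀ n ∉ l, σ n = Function.update v m s n) → p σ) ↔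
    ∀ σ : ℕ → α, (∀ n ∈ m :: l, D (σ n)) → (∀ n ∉ m :: l, σ n = v n) → p σ := by
  constructor
  · intro h σ hD hv
    refine h (σ m) (hD m List.mem_cons_self) σ (fun n hn => hD n (List.mem_cons_of_mem m hn))
      fun n hn => ?_
    obtain rfl | hnm := eq_or_ne n m
    · rw [Function.update_self]
    · rw [Function.update_of_ne hnm, hv n (by simp [hnm, hn])]
  · intro h s hs σ hD hσ
    refine h σ (fun n hn => ?_) fun n hn => ?_
    · by_cases hnl : n ∈ l
      · exact hD n hnl
      · obtain rfl := (List.mem_cons.1 hn).resolve_right hnl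
        simpa [hσ n hnl] using hs
    · obtain ⟨hnm, hnl⟩ := not_or.1 (mt List.mem_cons.2 hn)
      rw [hσ n hnl, Function.update_of_ne hnm]

namespace MSO

variable {A : Type} {T : UTree A} {v : ℕ → Node} {V : ℕ → Set Node}

/-- Implication, as an abbreviation in MSO. -/
def imp (φ ψ : MSO A) : MSO A := .not (.and φ (.not ψ))

/-- Universal quantification over nodes. -/
def allFO (n : ℕ) (φ : MSO A) : MSO A := .not (.exFO n (.not φ))

/-- Universal quantification over sets of nodes. -/
def allSO (n : ℕ) (φ : MSO A) : MSO A := .not (.exSO n (.not φ))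

/-- Simultaneous universal quantification over the node variables in a list. -/
def allFOs (l : List ℕ) (φ : MSO A) : MSO A := l.foldr allFO φ

/-- Simultaneous universal quantification over the set variables in a list. -/
def allSOs (l : List ℕ) (φ : MSO A) : MSO A := l.foldr allSO φ

/-- The conjunction of a list of formulas. The empty conjunction is `∀ x, x = x`. -/
def conj (l : List (MSO A)) : MSO A := l.foldr .and (allFO 0 (.eq 0 0))

@[simp] lemma sat_imp {φ ψ : MSO A} : Sat T v V (φ.imp ψ) ↔ (Sat T v V φ → Sat T v V ψ) := by
  simp [imp, Sat]

@[simp] lemma sat_allFO {n : ℕ} {φ : MSO A} :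
    Sat T v V (allFO n φ) ↔ ∀ s ∈ T.dom, Sat T (Function.update v n s) V φ := by
  simp [allFO, Sat]

@[simp] lemma sat_allSO {n : ℕ} {φ : MSO A} :
    Sat T v V (allSO n φ) ↔
      ∀ S : Set Node, S ⊆ ↑T.dom → Sat T v (Function.update V n S) φ := by
  simp [allSO, Sat]

@[simp] lemma sat_conj {l : List (MSO A)} : Sat T v V (conj l) ↔ ∀ φ ∈ l, Sat T v V φ := by
  induction l with
  | nil => simp [conj, Sat]
  | cons φ l ih => simpa [conj, Sat] using fun _ => ih

@[simp] lemma sat_allFOs {l : List ℕ} {φ : MSO A} :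
    Sat T v V (allFOs l φ) ↔
      ∀ σ : ℕ → Node, (∀ n ∈ l, σ n ∈ T.dom) → (∀ n ∉ l, σ n = v n) → Sat T σ V φ := by
  induction l generalizing v with
  | nil => simp [allFOs, ← funext_iff]
  | cons m l ih =>
    rw [allFOs, List.foldr_cons, sat_allFO]
    exact (forall₂_congr fun s _ => ih).trans (forall_update_iff (D := (· ∈ T.dom)))

@[simp] lemma sat_allSOs {l : List ℕ} {φ : MSO A} :
    Sat T v V (allSOs l φ) ↔
      ∀ W : ℕ → Set Node, (∀ n ∈ l, W n ⊆ ↑T.dom) → (∀ n ∉ l, W n = V n) → Sat T v W φ := by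
  induction l generalizing V with
  | nil => simp [allSOs, ← funext_iff]
  | cons m l ih =>
    rw [allSOs, List.foldr_cons, sat_allSO]
    exact (forall₂_congr fun S _ => ih).trans
      (forall_update_iff (D := fun W : Set Node => W ⊆ ↑T.dom))

section Relations

variable {r : ℕ → ℕ → MSO A} {R : Node → Node → Prop}

/-- The formula expressing `UTree.Covers` for the relation expressed by `r`. -/
def covers (r : ℕ → ℕ → MSO A) (x y : ℕ) : MSO A :=
  let z := x + y + 1
  .and (r x y) (.and (.not (.eq x y))
    (allFO z (imp (r x z) (imp (r z y) (imp (.not (.eq z x)) (.eq z y))))))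

/-- The formula expressing `UTree.IsMaximal` for the relation expressed by `r`. -/
def isMaximal (r : ℕ → ℕ → MSO A) (x : ℕ) : MSO A :=
  .and (r x x) (allFO (x + 1) (imp (r x (x + 1)) (.eq (x + 1) x)))

lemma sat_covers (hr : ∀ v x y, Sat T v V (r x y) ↔ R (v x) (v y)) {x y : ℕ} :
    Sat T v V (covers r x y) ↔ T.Covers R (v x) (v y) := by
  have hx : x ≠ x + y + 1 := by lia
  have hy : y ≠ x + y + 1 := by lia
  simp [covers, Sat, UTree.Covers, hr, hx, hy, or_iff_not_imp_left]

lemma sat_isMaximal (hr : ∀ v x y, Sat T v V (r x y) ↔ R (v x) (v y)) {x : ℕ} :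
    Sat T v V (isMaximal r x) ↔ T.IsMaximal R (v x) := by
  simp [isMaximal, Sat, UTree.IsMaximal, hr]

end Relations

end MSO

namespace DAtom

variable {A I : Type} {T : UTree A} {σ τ : ℕ → Node} {X : I → Set Node} {a : DAtom A I}

/-- Satisfaction of an atom when the intensional predicates are interpreted by `X`. -/
def Holds (T : UTree A) (X : I → Set Node) (σ : ℕ → Node) (a : DAtom A I) : Prop :=
  a.ExtHolds T σ ∧ ∀ i x, a = .idb i x → σ x ∈ X i

lemma holds_congr (h : ∀ x ∈ a.vars, σ x = τ x) : a.Holds T X σ ↔ a.Holds T X τ := by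
  cases a <;> simp_all [vars, Holds, ExtHolds]

/-- The translation of an atom into MSO. The intensional predicate `i` becomes the set
variable `e i`. -/
def toMSO (e : I → ℕ) : DAtom A I → MSO A
  | .fc x y => .and (.covers .desc x y) (.isMaximal (fun x y => .sib y x) y)
  | .ns x y => .covers .sib x y
  | .leaf x => .isMaximal .desc x
  | .lastChild x => .isMaximal .sib x
  | .root x => .isMaximal (fun x y => .desc y x) x
  | .lab a x => .lab a x
  | .idb i x => .mem (e i) x

lemma sat_toMSO {e : I → ℕ} {V : ℕ → Set Node} :
    MSO.Sat T σ V (a.toMSO e) ↔ a.Holds T (V ∘ e) σ := by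
  have hdesc (v : ℕ → Node) (x y) : MSO.Sat T v V (.desc x y) ↔ T.descR (v x) (v y) := Iff.rfl
  have hsib (v : ℕ → Node) (x y) : MSO.Sat T v V (.sib x y) ↔ T.sibR (v x) (v y) := Iff.rfl
  have hflipDesc (v : ℕ → Node) (x y) :
      MSO.Sat T v V (.desc y x) ↔ flip T.descR (v x) (v y) := Iff.rfl
  have hflipSib (v : ℕ → Node) (x y) :
      MSO.Sat T v V (.sib y x) ↔ flip T.sibR (v x) (v y) := Iff.rfl
  cases a with
  | fc x y =>
    simp [toMSO, Holds, ExtHolds, MSO.Sat, MSO.sat_covers hdesc, MSO.sat_isMaximal hflipSib,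
      UTree.firstChildR_iff, UTree.childR_iff_covers]
  | ns x y => simp [toMSO, Holds, ExtHolds, MSO.sat_covers hsib, UTree.nsR_iff_covers]
  | leaf x =>
    simp [toMSO, Holds, ExtHolds, MSO.sat_isMaximal hdesc, UTree.isLeaf_iff_isMaximal]
  | lastChild x =>
    simp [toMSO, Holds, ExtHolds, MSO.sat_isMaximal hsib, UTree.lastChildP_iff_isMaximal]
  | root x =>
    simp [toMSO, Holds, ExtHolds, MSO.sat_isMaximal hflipDesc,
      UTree.eq_nil_iff_isMaximal (T := T)]
  | lab a x => simp [toMSO, Holds, ExtHolds, MSO.Sat]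
  | idb i x => simp [toMSO, Holds, ExtHolds, MSO.Sat]

end DAtom

namespace DRule

variable {A I : Type} {T : UTree A} {X : I → Set Node}

/-- The interpretation `X` of the intensional predicates is closed under the rule `r`. -/
def Closed (T : UTree A) (X : I → Set Node) (r : DRule A I) : Prop :=
  ∀ σ : ℕ → Node, (∀ n, σ n ∈ T.dom) → (∀ a ∈ r.body, a.Holds T X σ) →
    σ r.headVar ∈ X r.headPred

/-- The variables of a rule. -/
def vars (r : DRule A I) : List ℕ := r.body.flatMap DAtom.vars

lemma headVar_mem_vars (r : DRule A I) : r.headVar ∈ r.vars :=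
  List.mem_flatMap.2 r.headVar_mem

lemma body_holds_congr {r : DRule A I} {σ τ : ℕ → Node} (h : ∀ x ∈ r.vars, σ x = τ x) :
    (∀ a ∈ r.body, a.Holds T X σ) ↔ ∀ a ∈ r.body, a.Holds T X τ :=
  forall₂_congr fun _ ha =>
    DAtom.holds_congr fun x hx => h x (List.mem_flatMap.2 ⟨_, ha, hx⟩)

/-- The formula expressing `DRule.Closed` for the interpretation of `i` by the set variable
`e i`. -/
def toMSO (e : I → ℕ) (r : DRule A I) : MSO A :=
  .allFOs r.vars (.imp (.conj (r.body.map (DAtom.toMSO e))) (.mem (e r.headPred) r.headVar))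

lemma sat_toMSO {e : I → ℕ} {v : ℕ → Node} {V : ℕ → Set Node} {r : DRule A I} :
    MSO.Sat T v V (r.toMSO e) ↔ r.Closed T (V ∘ e) := by
  classical
  simp only [toMSO, MSO.sat_allFOs, MSO.sat_imp, MSO.sat_conj, List.forall_mem_map,
    DAtom.sat_toMSO]
  constructor
  · intro h σ hσ hbody
    have heq : ∀ n ∈ r.vars, (if n ∈ r.vars then σ n else v n) = σ n := fun n hn => if_pos hn
    have hhead := h _ (fun n hn => (heq n hn).symm ▸ hσ n) (fun n hn => if_neg hn)
      ((body_holds_congr heq).2 hbody)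
    rwa [MSO.Sat, heq _ r.headVar_mem_vars] at hhead
  · intro h σ hσ _ hbody
    have heq : ∀ n ∈ r.vars, (if n ∈ r.vars then σ n else []) = σ n := fun n hn => if_pos hn
    have hmem (n : ℕ) : (if n ∈ r.vars then σ n else []) ∈ T.dom := by
      split_ifs with hn
      exacts [hσ n hn, T.nil_mem]
    have hhead := h _ hmem ((body_holds_congr heq).2 hbody)
    rwa [heq _ r.headVar_mem_vars] at hhead

end DRule

namespace Derives

variable {A I : Type} {T : UTree A} {P : List (DRule A I)}

lemma mem_dom {i : I} {s : Node} (h : Derives T P i s) : s ∈ T.dom := by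
  cases h with
  | step r hr σ hσ => exact hσ _

lemma of_body_holds {r : DRule A I} (hr : r ∈ P) {σ : ℕ → Node} (hσ : ∀ n, σ n ∈ T.dom)
    (hbody : ∀ a ∈ r.body, a.Holds T (fun i => {s | Derives T P i s}) σ) :
    Derives T P r.headPred (σ r.headVar) :=
  step r hr σ hσ (fun a ha => (hbody a ha).1) fun i y hy => (hbody _ hy).2 i y rfl

lemma mem_of_closed {X : I → Set Node} (hX : ∀ r ∈ P, r.Closed T X) {i : I} {s : Node}
    (h : Derives T P i s) : s ∈ X i := by
  induction h with
  | step r hr σ hσ hext _ ih =>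
    exact hX r hr σ hσ fun a ha => ⟨hext a ha, fun i y hy => ih i y (hy ▸ ha)⟩

/-- Knaster–Tarski: the least fixed point is the intersection of the closed interpretations. -/
lemma iff_forall_closed {i : I} {s : Node} :
    Derives T P i s ↔
      ∀ X : I → Set Node, (∀ j, X j ⊆ ↑T.dom) → (∀ r ∈ P, r.Closed T X) → s ∈ X i :=
  ⟨fun h _ _ hX => h.mem_of_closed hX, fun h =>
    h (fun j => {t | Derives T P j t}) (fun _ _ => mem_dom) fun _ hr _ => of_body_holds hr⟩

end Derives

theorem exists_definesU_derives {A I : Type} [Finite I] (P : List (DRule A I)) (H : I) :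
    ∃ φ : MSO A, φ.DefinesU fun T => {s | Derives T P H s} := by
  classical
  have := Fintype.ofFinite I
  obtain ⟨e, he⟩ := Countable.exists_injective_nat I
  let l := (Finset.univ : Finset I).toList.map e
  have hl (i : I) : e i ∈ l := List.mem_map_of_mem (by simp)
  refine ⟨.allSOs l (.imp (.conj (P.map (DRule.toMSO e))) (.mem (e H) 0)), fun T v V s _ => ?_⟩
  simp only [Set.mem_ofPred_eq, Derives.iff_forall_closed, MSO.sat_allSOs, MSO.sat_imp,
    MSO.sat_conj, List.forall_mem_map, DRule.sat_toMSO, MSO.Sat, Function.update_self]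
  constructor
  · intro h W hW _ hclosed
    exact h (W ∘ e) (fun j => hW _ (hl j)) hclosed
  · intro h X hX hclosed
    have hXe : Function.extend e X V ∘ e = X := Function.extend_comp he X V
    have hmem := h (Function.extend e X V)
      (by simpa [l, he.extend_apply] using hX)
      (fun n hn => Function.extend_apply' _ _ _ fun ⟨i, hi⟩ => hn (hi ▸ hl i))
      (hXe.symm ▸ hclosed)
    rwa [he.extend_apply] at hmem

/-! ### The first-child/next-sibling encoding -/

section BinaryTrees

variable {α : Type*}

/-- The set of labels of the vertices of a binary tree. -/
def vertexSet : BinaryTree α → Set α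
  | .nil => ∅
  | .node a l r => insert a (vertexSet l ∪ vertexSet r)

/-- The vertices of a binary tree carry pairwise distinct labels. -/
def NodupVertices : BinaryTree α → Prop
  | .nil => True
  | .node a l r => a ∉ vertexSet l ∧ a ∉ vertexSet r ∧ Disjoint (vertexSet l) (vertexSet r) ∧
      NodupVertices l ∧ NodupVertices r

end BinaryTrees

lemma exists_le_iff_or {P : ℕ → Prop} {i : ℕ} :
    (∃ j, i ≤ j ∧ P j) ↔ P i ∨ ∃ j, i + 1 ≤ j ∧ P j := by
  simp only [le_iff_eq_or_lt (a := i), Nat.succ_le_iff, or_and_right, exists_or, exists_eq_left']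

lemma prefix_iff_eq_or_exists {s t : Node} : s <+: t ↔ t = s ∨ ∃ j, s ++ [j] <+: t := by
  constructor
  · rintro ⟨_ | ⟨j, w⟩, rfl⟩
    · simp
    · exact Or.inr ⟨j, w, by simp⟩
  · rintro (rfl | ⟨j, hj⟩)
    exacts [List.prefix_rfl, (List.prefix_append _ _).trans hj]

lemma eq_of_append_singleton_prefix {u t : Node} {i j : ℕ} (hi : u ++ [i] <+: t)
    (hj : u ++ [j] <+: t) : i = j := by
  simpa using (List.prefix_of_prefix_length_le hi hj (by simp)).eq_of_length (by simp)

namespace UTree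

variable {A : Type} {T : UTree A} {u s t : Node} {i : ℕ}

open Classical in
/-- The nodes of the subtrees rooted at the `i`-th child of `u` and its later siblings. -/
noncomputable def forestNodes (T : UTree A) (u : Node) (i : ℕ) : Finset Node :=
  {t ∈ T.dom | ∃ j, i ≤ j ∧ u ++ [j] <+: t}

@[simp] lemma mem_forestNodes :
    t ∈ T.forestNodes u i ↔ t ∈ T.dom ∧ ∃ j, i ≤ j ∧ u ++ [j] <+: t := by
  simp [forestNodes]

lemma forestNodes_of_notMem (h : u ++ [i] ∉ T.dom) : T.forestNodes u i = ∅ := by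
  refine Finset.eq_empty_of_forall_notMem fun t ht => h ?_
  obtain ⟨htD, j, hij, hj⟩ := mem_forestNodes.1 ht
  exact append_singleton_mem_of_le (T.prefix_closed htD hj) hij

lemma forestNodes_of_mem (h : u ++ [i] ∈ T.dom) :
    T.forestNodes u i =
      insert (u ++ [i]) (T.forestNodes (u ++ [i]) 0 ∪ T.forestNodes u (i + 1)) := by
  ext t
  simp only [mem_forestNodes, Finset.mem_insert, Finset.mem_union, exists_le_iff_or (i := i),
    prefix_iff_eq_or_exists (s := u ++ [i]), Nat.zero_le, true_and]
  have hdom : t = u ++ [i] → t ∈ T.dom := fun ht => ht ▸ h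
  tauto

variable (T) in
lemma dom_eq_insert : T.dom = insert [] (T.forestNodes [] 0) := by
  ext s
  simp only [mem_forestNodes, Finset.mem_insert, Nat.zero_le, true_and]
  constructor
  · exact fun hs => (prefix_iff_eq_or_exists.1 List.nil_prefix).imp_right fun h => ⟨hs, h⟩
  · rintro (rfl | ⟨hs, -⟩)
    exacts [T.nil_mem, hs]

lemma descR_iff_eq_or_mem_forestNodes (hs : s ∈ T.dom) :
    T.descR s t ↔ t = s ∨ t ∈ T.forestNodes s 0 := by
  rw [descR, prefix_iff_eq_or_exists, mem_forestNodes]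
  simp only [Nat.zero_le, true_and, hs]
  constructor
  · exact fun ⟨ht, h⟩ => h.imp_right fun h => ⟨ht, h⟩
  · rintro (rfl | ⟨ht, h⟩)
    exacts [⟨hs, Or.inl rfl⟩, ⟨ht, Or.inr h⟩]

lemma append_singleton_notMem_forestNodes_zero : u ++ [i] ∉ T.forestNodes (u ++ [i]) 0 := by
  simp

lemma append_singleton_notMem_forestNodes_succ : u ++ [i] ∉ T.forestNodes u (i + 1) := by
  simp

lemma forestNodes_zero_ssubset (h : u ++ [i] ∈ T.dom) :
    T.forestNodes (u ++ [i]) 0 ⊂ T.forestNodes u i := by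
  rw [forestNodes_of_mem h]
  exact ⟨Finset.subset_union_left.trans (Finset.subset_insert _ _), fun hsub =>
    append_singleton_notMem_forestNodes_zero (hsub (Finset.mem_insert_self _ _))⟩

lemma forestNodes_succ_ssubset (h : u ++ [i] ∈ T.dom) :
    T.forestNodes u (i + 1) ⊂ T.forestNodes u i := by
  rw [forestNodes_of_mem h]
  exact ⟨Finset.subset_union_right.trans (Finset.subset_insert _ _), fun hsub =>
    append_singleton_notMem_forestNodes_succ (hsub (Finset.mem_insert_self _ _))⟩

lemma disjoint_forestNodes :
    Disjoint (T.forestNodes (u ++ [i]) 0) (T.forestNodes u (i + 1)) := by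
  rw [Finset.disjoint_left]
  intro t ht ht'
  obtain ⟨-, j, -, hj⟩ := mem_forestNodes.1 ht
  obtain ⟨-, k, hik, hk⟩ := mem_forestNodes.1 ht'
  have := eq_of_append_singleton_prefix ((List.prefix_append _ _).trans hj) hk
  lia

open Classical in
/-- The first-child/next-sibling encoding of the forest of the subtrees rooted at the `i`-th
child of `u` and its later siblings: a left child in the binary tree is a first child, a right
child is a next sibling. -/
noncomputable def forest (T : UTree A) (u : Node) (i : ℕ) : BinaryTree Node :=
  if u ++ [i] ∈ T.dom then .node (u ++ [i]) (forest T (u ++ [i]) 0) (forest T u (i + 1))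
  else .nil
termination_by (T.forestNodes u i).card
decreasing_by
  · exact Finset.card_lt_card (forestNodes_zero_ssubset ‹_›)
  · exact Finset.card_lt_card (forestNodes_succ_ssubset ‹_›)

/-- The encoding of the forest of the subtrees rooted at the right siblings of `s`. -/
noncomputable def rightForest (T : UTree A) (s : Node) : BinaryTree Node :=
  match s.getLast? with
  | none => .nil
  | some i => T.forest s.dropLast (i + 1)

/-- The encoding of the subtree at `s` together with the subtrees at the right siblings of `s`.
The encoding of the whole tree is `T.encode []`. -/
noncomputable def encode (T : UTree A) (s : Node) : BinaryTree Node :=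
  .node s (T.forest s 0) (T.rightForest s)

@[simp] lemma rightForest_nil : T.rightForest [] = .nil := rfl

@[simp] lemma rightForest_append_singleton : T.rightForest (u ++ [i]) = T.forest u (i + 1) := by
  simp [rightForest]

lemma forest_of_mem (h : u ++ [i] ∈ T.dom) : T.forest u i = T.encode (u ++ [i]) := by
  rw [forest, if_pos h, encode, rightForest_append_singleton]

lemma forest_of_notMem (h : u ++ [i] ∉ T.dom) : T.forest u i = .nil := by
  rw [forest, if_neg h]

lemma forest_induction {p : Node → ℕ → Prop} (nil : ∀ u i, u ++ [i] ∉ T.dom → p u i)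
    (node : ∀ u i, u ++ [i] ∈ T.dom → p (u ++ [i]) 0 → p u (i + 1) → p u i) (u : Node) (i : ℕ) :
    p u i :=
  forest.induct T p (fun u i h => node u i h) nil u i

lemma forest_zero_of_firstChildR (h : T.firstChildR s t) : T.forest s 0 = T.encode t := by
  obtain ⟨-, ht, rfl⟩ := h
  exact forest_of_mem ht

lemma forest_zero_of_isLeaf (h : T.isLeaf s) : T.forest s 0 = .nil :=
  forest_of_notMem (h.2 0)

lemma rightForest_of_nsR (h : T.nsR s t) : T.rightForest s = T.encode t := by
  obtain ⟨-, ht, u, i, rfl, rfl⟩ := h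
  rw [rightForest_append_singleton, forest_of_mem ht]

lemma rightForest_of_lastChildP (h : DAtom.lastChildP T s) : T.rightForest s = .nil := by
  obtain ⟨-, u, i, rfl, hlast⟩ := h
  rw [rightForest_append_singleton, forest_of_notMem hlast]

lemma isLeaf_or_exists_firstChildR (hs : s ∈ T.dom) :
    T.isLeaf s ∨ ∃ t, T.firstChildR s t := by
  by_cases h : s ++ [0] ∈ T.dom
  · exact Or.inr ⟨_, hs, h, rfl⟩
  · exact Or.inl ⟨hs, fun i hi => h (append_singleton_mem_of_le hi (Nat.zero_le i))⟩

lemma eq_nil_or_lastChildP_or_exists_nsR (hs : s ∈ T.dom) :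
    s = [] ∨ DAtom.lastChildP T s ∨ ∃ t, T.nsR s t := by
  obtain rfl | ⟨u, i, rfl⟩ := s.eq_nil_or_concat'
  · exact Or.inl rfl
  by_cases h : u ++ [i + 1] ∈ T.dom
  · exact Or.inr (Or.inr ⟨_, hs, h, u, i, rfl, rfl⟩)
  · exact Or.inr (Or.inl ⟨hs, u, i, rfl, h⟩)

@[elab_as_elim] lemma bottomUp_induction {p : Node → Prop}
    (step : ∀ s ∈ T.dom, (∀ t, T.firstChildR s t → p t) → (∀ t, T.nsR s t → p t) → p s)
    (hs : s ∈ T.dom) : p s := by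
  have hforest (u i) : u ++ [i] ∈ T.dom → p (u ++ [i]) := by
    induction u, i using T.forest_induction with
    | nil u i h => exact fun h' => (h h').elim
    | node u i h ihl ihr =>
      refine fun _ => step _ h ?_ ?_
      · rintro _ ⟨-, ht, rfl⟩
        exact ihl ht
      · rintro _ ⟨-, ht, w, j, hw, rfl⟩
        obtain ⟨rfl, rfl⟩ := List.append_singleton_inj.1 hw
        exact ihr ht
  refine step s hs ?_ ?_
  · rintro _ ⟨-, ht, rfl⟩
    exact hforest _ _ ht
  · rintro _ ⟨-, ht, u, i, -, rfl⟩
    exact hforest _ _ ht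

@[elab_as_elim] lemma topDown_induction {p : Node → Prop} (root : p [])
    (firstChild : ∀ s t, T.firstChildR s t → p s → p t)
    (nextSibling : ∀ s t, T.nsR s t → p s → p t) (hs : s ∈ T.dom) : p s := by
  induction s using List.reverseRecOn with
  | nil => exact root
  | append_singleton u i ih =>
    have hu : u ∈ T.dom := mem_dom_of_append_mem hs
    induction i with
    | zero => exact firstChild u _ ⟨hu, hs, rfl⟩ (ih hu)
    | succ i ihi =>
      have hi : u ++ [i] ∈ T.dom := append_singleton_mem_of_le hs i.le_succ
      exact nextSibling _ _ ⟨hi, hs, u, i, rfl, rfl⟩ (ihi hi)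

lemma vertexSet_forest : vertexSet (T.forest u i) = ↑(T.forestNodes u i) := by
  induction u, i using T.forest_induction with
  | nil u i h => simp [forest_of_notMem h, forestNodes_of_notMem h, vertexSet]
  | node u i h ihl ihr => simp [forest_of_mem h, forestNodes_of_mem h, encode, vertexSet, ihl, ihr]

lemma mem_vertexSet_encode : s ∈ vertexSet (T.encode s) :=
  Or.inl rfl

lemma vertexSet_forest_zero_subset_encode :
    vertexSet (T.forest s 0) ⊆ vertexSet (T.encode s) :=
  fun _ ht => Or.inr (Or.inl ht)

lemma vertexSet_rightForest_subset_encode :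
    vertexSet (T.rightForest s) ⊆ vertexSet (T.encode s) :=
  fun _ ht => Or.inr (Or.inr ht)

lemma vertexSet_encode_nil : vertexSet (T.encode []) = ↑T.dom := by
  conv_rhs => rw [T.dom_eq_insert]
  simp [encode, vertexSet, vertexSet_forest]

lemma nodupVertices_forest : NodupVertices (T.forest u i) := by
  induction u, i using T.forest_induction with
  | nil u i h => simp [forest_of_notMem h, NodupVertices]
  | node u i h ihl ihr =>
    simp only [forest_of_mem h, encode, rightForest_append_singleton, NodupVertices,
      vertexSet_forest, Finset.mem_coe, Finset.disjoint_coe]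
    exact ⟨append_singleton_notMem_forestNodes_zero, append_singleton_notMem_forestNodes_succ,
      disjoint_forestNodes, ihl, ihr⟩

lemma nodupVertices_encode (hs : s ∈ T.dom) : NodupVertices (T.encode s) := by
  obtain rfl | ⟨u, i, rfl⟩ := s.eq_nil_or_concat'
  · simp [encode, NodupVertices, vertexSet, vertexSet_forest, nodupVertices_forest]
  · exact forest_of_mem hs ▸ nodupVertices_forest

end UTree

/-! ### Deterministic bottom-up tree automata -/

/-- A deterministic bottom-up automaton on binary trees over the alphabet `Γ`, as an algebra
on its set `S` of states. Acceptance conditions are given separately, as sets of states. -/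
structure TreeAlgebra (Γ S : Type*) where
  nil : S
  node : Γ → S → S → S

namespace TreeAlgebra

variable {α Γ Δ B S S' : Type*} {M : TreeAlgebra Γ S} {f g : α → Γ}

/-- The state reached on a binary tree whose vertex `a` carries the letter `f a`. -/
def eval (M : TreeAlgebra Γ S) (f : α → Γ) : BinaryTree α → S
  | .nil => M.nil
  | .node a l r => M.node (f a) (M.eval f l) (M.eval f r)

@[simp] lemma eval_nil : M.eval f .nil = M.nil := rfl

lemma eval_node (a : α) (l r : BinaryTree α) :
    M.eval f (.node a l r) = M.node (f a) (M.eval f l) (M.eval f r) := rfl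

lemma eval_congr {t : BinaryTree α} (h : Set.EqOn f g (vertexSet t)) :
    M.eval f t = M.eval g t := by
  induction t with
  | nil => rfl
  | node a l r ihl ihr =>
    rw [vertexSet, Set.insert_eq, Set.eqOn_union, Set.eqOn_union, Set.eqOn_singleton] at h
    rw [eval_node, eval_node, h.1, ihl h.2.1, ihr h.2.2]

/-- The product of two automata over the same alphabet. -/
def prod (M : TreeAlgebra Γ S) (N : TreeAlgebra Γ S') : TreeAlgebra Γ (S × S') where
  nil := (M.nil, N.nil)
  node a l r := (M.node a l.1 r.1, N.node a l.2 r.2)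

lemma eval_prod (N : TreeAlgebra Γ S') (t : BinaryTree α) :
    (M.prod N).eval f t = (M.eval f t, N.eval f t) := by
  induction t with
  | nil => rfl
  | node a l r ihl ihr => rw [eval_node, ihl, ihr]; rfl

/-- The automaton reading `h b` instead of the letter `b`. -/
def comap (h : Δ → Γ) (M : TreeAlgebra Γ S) : TreeAlgebra Δ S where
  nil := M.nil
  node b := M.node (h b)

lemma eval_comap (h : Δ → Γ) (f : α → Δ) (t : BinaryTree α) :
    (M.comap h).eval f t = M.eval (h ∘ f) t := by
  induction t with
  | nil => rfl
  | node a l r ihl ihr => rw [eval_node, ihl, ihr]; rfl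

/-- The subset construction for the nondeterministic automaton which guesses a value in `B` at
every vertex and lets `M` read the given letter combined with this guess by `c`. -/
def power (c : Δ → B → Γ) (M : TreeAlgebra Γ S) : TreeAlgebra Δ (Set S) where
  nil := {M.nil}
  node d L R := {q | ∃ b, ∃ l ∈ L, ∃ r ∈ R, q = M.node (c d b) l r}

lemma mem_eval_power [Nonempty B] (c : Δ → B → Γ) (f : α → Δ) {t : BinaryTree α}
    (ht : NodupVertices t) {q : S} :
    q ∈ (M.power c).eval f t ↔ ∃ g : α → B, q = M.eval (fun a => c (f a) (g a)) t := by
  classical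
  induction t generalizing q with
  | nil => simp [power]
  | node a l r ihl ihr =>
    obtain ⟨hal, har, hlr, hl, hr⟩ := ht
    simp only [eval_node]
    constructor
    · rintro ⟨b, p, hp, p', hp', rfl⟩
      obtain ⟨gl, rfl⟩ := (ihl hl).1 hp
      obtain ⟨gr, rfl⟩ := (ihr hr).1 hp'
      refine ⟨fun s => if s = a then b else if s ∈ vertexSet l then gl s else gr s, ?_⟩
      simp only [if_pos]
      congr 1 <;> refine eval_congr fun s hs => ?_
      · simp [ne_of_mem_of_not_mem hs hal, hs]
      · simp [ne_of_mem_of_not_mem hs har, hlr.notMem_of_mem_right hs]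
    · rintro ⟨g, rfl⟩
      exact ⟨g a, _, (ihl hl).2 ⟨g, rfl⟩, _, (ihr hr).2 ⟨g, rfl⟩, rfl⟩

/-- The automaton which runs `M` and remembers whether, at some vertex, the letter and the two
states of `M` below this vertex satisfy `p`. -/
def any (p : Γ → S → S → Prop) (M : TreeAlgebra Γ S) : TreeAlgebra Γ (S × Prop) where
  nil := (M.nil, False)
  node a l r := (M.node a l.1 r.1, p a l.1 r.1 ∨ l.2 ∨ r.2)

lemma fst_eval_any (p : Γ → S → S → Prop) (t : BinaryTree α) :
    ((M.any p).eval f t).1 = M.eval f t := by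
  induction t with
  | nil => rfl
  | node a l r ihl ihr => rw [eval_node, eval_node, ← ihl, ← ihr]; rfl

lemma snd_eval_any_node (p : Γ → S → S → Prop) (a : α) (l r : BinaryTree α) :
    ((M.any p).eval f (.node a l r)).2 ↔ p (f a) (M.eval f l) (M.eval f r) ∨
      ((M.any p).eval f l).2 ∨ ((M.any p).eval f r).2 := by
  rw [← fst_eval_any p l, ← fst_eval_any p r, eval_node]
  rfl

variable {A : Type} {T : UTree A} {f : Node → Γ}

lemma snd_eval_any_forest (p : Γ → S → S → Prop) {u : Node} {i : ℕ} :
    ((M.any p).eval f (T.forest u i)).2 ↔ ∃ s ∈ T.forestNodes u i,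
      p (f s) (M.eval f (T.forest s 0)) (M.eval f (T.rightForest s)) := by
  induction u, i using T.forest_induction with
  | nil u i h => simp [T.forest_of_notMem h, T.forestNodes_of_notMem h, any]
  | node u i h ihl ihr =>
    rw [T.forest_of_mem h, UTree.encode, snd_eval_any_node, ihl,
      T.rightForest_append_singleton, ihr, T.forestNodes_of_mem h]
    simp only [Finset.exists_mem_insert, Finset.mem_union, or_and_right, exists_or,
      T.rightForest_append_singleton]

lemma snd_eval_any_encode_nil (p : Γ → S → S → Prop) :
    ((M.any p).eval f (T.encode [])).2 ↔ ∃ s ∈ T.dom,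
      p (f s) (M.eval f (T.forest s 0)) (M.eval f (T.rightForest s)) := by
  rw [UTree.encode, snd_eval_any_node, snd_eval_any_forest, T.dom_eq_insert,
    Finset.exists_mem_insert]
  simp [any]

/-- The automaton deciding whether some root of an encoded forest carries a letter in `p`. The
roots are the vertices on the right spine of the encoding. -/
def anyRoot (p : Γ → Prop) : TreeAlgebra Γ Prop where
  nil := False
  node a _ r := p a ∨ r

lemma eval_anyRoot_forest {p : Γ → Prop} {u : Node} {i : ℕ} :
    (anyRoot p).eval f (T.forest u i) ↔ ∃ j, i ≤ j ∧ u ++ [j] ∈ T.dom ∧ p (f (u ++ [j])) := by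
  induction u, i using T.forest_induction with
  | nil u i h =>
    rw [T.forest_of_notMem h]
    exact ⟨False.elim, fun ⟨j, hij, hj, _⟩ => h (UTree.append_singleton_mem_of_le hj hij)⟩
  | node u i h _ ih =>
    rw [exists_le_iff_or, ← ih, T.forest_of_mem h, UTree.encode, eval_node,
      T.rightForest_append_singleton, and_iff_right h]
    rfl

lemma or_eval_anyRoot_rightForest (f : Node → Γ) (p : Γ → Prop) {u : Node} {i : ℕ}
    (h : u ++ [i] ∈ T.dom) :
    p (f (u ++ [i])) ∨ (anyRoot p).eval f (T.rightForest (u ++ [i])) ↔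
      ∃ j, i ≤ j ∧ u ++ [j] ∈ T.dom ∧ p (f (u ++ [j])) := by
  rw [← eval_anyRoot_forest, T.forest_of_mem h]
  rfl

end TreeAlgebra

/-! ### From MSO to tree automata -/

section Recognizable

variable {A ι S : Type} {R R' : UTree A → (ι → Set Node) → Prop}

namespace UTree

/-- The letter at the node `s` in the alphabet that expands the labels by one bit for each of
the sets `W x`. -/
def letter (T : UTree A) (W : ι → Set Node) (s : Node) : A × (ι → Prop) :=
  (T.label s, fun x => s ∈ W x)

end UTree

/-- A relation between trees and families of sets of nodes is recognizable if a finite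
bottom-up automaton on the encodings of the trees, with the sets marked, decides it. -/
def Recognizable (R : UTree A → (ι → Set Node) → Prop) : Prop :=
  ∃ (S : Type) (_ : Finite S) (M : TreeAlgebra (A × (ι → Prop)) S) (acc : Set S),
    ∀ T W, R T W ↔ M.eval (T.letter W) (T.encode []) ∈ acc

namespace Recognizable

lemma of_iff (hR : Recognizable R) (h : ∀ T W, R' T W ↔ R T W) : Recognizable R' := by
  obtain ⟨S, hS, M, acc, hM⟩ := hR
  exact ⟨S, hS, M, acc, fun T W => (h T W).trans (hM T W)⟩

lemma not (hR : Recognizable R) : Recognizable fun T W => ¬ R T W := by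
  obtain ⟨S, hS, M, acc, hM⟩ := hR
  exact ⟨S, hS, M, accᶜ, fun T W => not_congr (hM T W)⟩

lemma and (hR : Recognizable R) (hR' : Recognizable R') :
    Recognizable fun T W => R T W ∧ R' T W := by
  obtain ⟨S, hS, M, acc, hM⟩ := hR
  obtain ⟨S', hS', M', acc', hM'⟩ := hR'
  refine ⟨S × S', inferInstance, M.prod M', acc ×ˢ acc', fun T W => ?_⟩
  rw [TreeAlgebra.eval_prod]
  exact and_congr (hM T W) (hM' T W)

lemma exists_mem_dom_eval [Finite S] (M : TreeAlgebra (A × (ι → Prop)) S)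
    (p : A × (ι → Prop) → S → S → Prop) :
    Recognizable fun T W => ∃ s ∈ T.dom, p (T.letter W s) (M.eval (T.letter W) (T.forest s 0))
      (M.eval (T.letter W) (T.rightForest s)) :=
  ⟨S × Prop, inferInstance, M.any p, {q | q.2}, fun _ _ =>
    (TreeAlgebra.snd_eval_any_encode_nil p).symm⟩

lemma exists_mem_dom_letter (p : A × (ι → Prop) → Prop) :
    Recognizable fun T W => ∃ s ∈ T.dom, p (T.letter W s) :=
  exists_mem_dom_eval ⟨(), fun _ _ _ => ()⟩ fun a _ _ => p a

lemma exists_descR (x y : ι) :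
    Recognizable fun (T : UTree A) W => ∃ s ∈ W x, ∃ t ∈ W y, T.descR s t := by
  let M : TreeAlgebra (A × (ι → Prop)) (Unit × Prop) :=
    TreeAlgebra.any (fun a _ _ => a.2 y) ⟨(), fun _ _ _ => ()⟩
  refine (exists_mem_dom_eval M fun a l _ => a.2 x ∧ (a.2 y ∨ l.2)).of_iff fun T W => ?_
  simp only [M, TreeAlgebra.snd_eval_any_forest, UTree.letter]
  constructor
  · rintro ⟨s, hx, t, hy, hst⟩
    obtain rfl | ht := (UTree.descR_iff_eq_or_mem_forestNodes hst.1).1 hst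
    exacts [⟨t, hst.1, hx, Or.inl hy⟩, ⟨s, hst.1, hx, Or.inr ⟨t, ht, hy⟩⟩]
  · rintro ⟨s, hs, hx, hy | ⟨t, ht, hy⟩⟩
    exacts [⟨s, hx, s, hy, hs, hs, List.prefix_rfl⟩,
      ⟨s, hx, t, hy, (UTree.descR_iff_eq_or_mem_forestNodes hs).2 (Or.inr ht)⟩]

lemma exists_sibR (x y : ι) :
    Recognizable fun (T : UTree A) W => ∃ s ∈ W x, ∃ t ∈ W y, T.sibR s t := by
  let N : TreeAlgebra (A × (ι → Prop)) (Prop × Prop) :=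
    TreeAlgebra.any (fun a _ r => a.2 x ∧ (a.2 y ∨ r)) (.anyRoot fun a => a.2 y)
  refine (exists_mem_dom_eval N fun _ l _ => l.2).of_iff fun T W => ?_
  simp only [N, TreeAlgebra.snd_eval_any_forest]
  constructor
  · rintro ⟨_, hx, _, hy, hs, ht, u, i, j, rfl, rfl, hij⟩
    refine ⟨u, UTree.mem_dom_of_append_mem hs, u ++ [i], by simpa using hs, hx, ?_⟩
    exact (TreeAlgebra.or_eval_anyRoot_rightForest (T.letter W) (·.2 y) hs).2 ⟨j, hij, ht, hy⟩
  · rintro ⟨u, -, s, hs, hx, hy⟩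
    obtain ⟨hsD, -⟩ := UTree.mem_forestNodes.1 hs
    obtain rfl | ⟨w, i, rfl⟩ := s.eq_nil_or_concat'
    · simp at hs
    obtain ⟨j, hij, hj, hyj⟩ :=
      (TreeAlgebra.or_eval_anyRoot_rightForest (T.letter W) (·.2 y) hsD).1 hy
    exact ⟨_, hx, _, hyj, UTree.sibR_append_singleton.2 ⟨hsD, hj, rfl, hij⟩⟩

lemma exists_subset_dom [DecidableEq ι] (hR : Recognizable R) (x : ι) :
    Recognizable fun T W => ∃ Z : Set Node, Z ⊆ ↑T.dom ∧ R T (Function.update W x Z) := by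
  obtain ⟨S, hS, M, acc, hM⟩ := hR
  let c : A × (ι → Prop) → Prop → A × (ι → Prop) := fun a b => (a.1, Function.update a.2 x b)
  have hc (T : UTree A) (W : ι → Set Node) (Z : Set Node) (s : Node) :
      T.letter (Function.update W x Z) s = c (T.letter W s) (s ∈ Z) :=
    Prod.ext rfl (funext fun y => Function.apply_update (fun _ Z => s ∈ Z) W x Z y)
  refine ⟨Set S, inferInstance, M.power c, {L | ∃ q ∈ L, q ∈ acc}, fun T W => ?_⟩
  simp only [Set.mem_ofPred_eq,
    TreeAlgebra.mem_eval_power c _ (UTree.nodupVertices_encode T.nil_mem)]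
  constructor
  · rintro ⟨Z, -, hZ⟩
    exact ⟨_, ⟨(· ∈ Z), rfl⟩, by simpa only [hM, ← hc] using hZ⟩
  · rintro ⟨_, ⟨g, rfl⟩, hg⟩
    refine ⟨{s ∈ (T.dom : Set Node) | g s}, Set.sep_subset _ _, ?_⟩
    rw [hM, TreeAlgebra.eval_congr (g := fun s => c (T.letter W s) (g s))]
    · exact hg
    · intro s hs
      rw [UTree.vertexSet_encode_nil] at hs
      simp only [hc, Set.mem_sep_iff, hs, true_and]

/-- Singletons are the nonempty sets that do not meet both some set and its complement. -/
lemma eq_singleton_inter_dom [Nontrivial ι] (x : ι) :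
    Recognizable fun (T : UTree A) W => ∃ s ∈ T.dom, W x ∩ ↑T.dom = {s} := by
  classical
  obtain ⟨y, hyx⟩ := exists_ne x
  have hsplit : Recognizable fun (T : UTree A) (W : ι → Set Node) => ∃ Z : Set Node, Z ⊆ ↑T.dom ∧
      (∃ s ∈ T.dom, s ∈ W x ∧ s ∈ Z) ∧ ∃ s ∈ T.dom, s ∈ W x ∧ s ∉ Z :=
    (((exists_mem_dom_letter fun a => a.2 x ∧ a.2 y).and
      (exists_mem_dom_letter fun a => a.2 x ∧ ¬ a.2 y)).exists_subset_dom y).of_iff fun T W => by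
        simp [UTree.letter, hyx.symm]
  refine ((exists_mem_dom_letter (·.2 x)).and hsplit.not).of_iff fun T W => ?_
  constructor
  · rintro ⟨s, hs, hWs⟩
    have heq (t) (ht : t ∈ T.dom) (htW : t ∈ W x) : t = s := hWs.subset ⟨htW, ht⟩
    refine ⟨⟨s, hs, (hWs.superset rfl).1⟩, ?_⟩
    rintro ⟨Z, -, ⟨t, ht, htW, htZ⟩, t', ht', htW', htZ'⟩
    exact htZ' (heq t' ht' htW' ▸ heq t ht htW ▸ htZ)
  · rintro ⟨⟨s, hs, hsW⟩, hsplit⟩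
    refine ⟨s, hs, Set.Subset.antisymm (fun t ht => ?_) (by simpa using ⟨hsW, hs⟩)⟩
    by_contra hts
    exact hsplit ⟨{s}, by simpa using hs, ⟨s, hs, hsW, rfl⟩, t, ht.2, ht.1, hts⟩

lemma exists_mem_dom [DecidableEq ι] [Nontrivial ι] (hR : Recognizable R) (x : ι) :
    Recognizable fun T W => ∃ s ∈ T.dom, R T (Function.update W x {s}) := by
  refine (((eq_singleton_inter_dom x).and hR).exists_subset_dom x).of_iff fun T W => ?_
  simp only [Function.update_self]
  constructor
  · rintro ⟨s, hs, h⟩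
    have hsub : {s} ⊆ (T.dom : Set Node) := by simpa using hs
    exact ⟨{s}, hsub, ⟨s, hs, Set.inter_eq_left.2 hsub⟩, h⟩
  · rintro ⟨Z, hZ, ⟨s, hs, hZs⟩, h⟩
    exact ⟨s, hs, (Set.inter_eq_left.2 hZ).symm.trans hZs ▸ h⟩

end Recognizable

end Recognizable

namespace MSO

variable {A : Type}

/-- The semantics of MSO in which the node variable `n` is replaced by the set variable
`W (Sum.inl n)`, meant to be a singleton; the set variable `n` becomes `W (Sum.inr n)`. -/
def SetSat (T : UTree A) (W : ℕ ⊕ ℕ → Set Node) : MSO A → Prop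
  | .eq x y => ∃ s ∈ T.dom, s ∈ W (.inl x) ∧ s ∈ W (.inl y)
  | .desc x y => ∃ s ∈ W (.inl x), ∃ t ∈ W (.inl y), T.descR s t
  | .sib x y => ∃ s ∈ W (.inl x), ∃ t ∈ W (.inl y), T.sibR s t
  | .lab a x => ∃ s ∈ T.dom, s ∈ W (.inl x) ∧ T.label s = a
  | .mem X x => ∃ s ∈ T.dom, s ∈ W (.inl x) ∧ s ∈ W (.inr X)
  | .not φ => ¬ SetSat T W φ
  | .and φ ψ => SetSat T W φ ∧ SetSat T W ψ
  | .exFO n φ => ∃ s ∈ T.dom, SetSat T (Function.update W (.inl n) {s}) φ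
  | .exSO n φ => ∃ Z : Set Node, Z ⊆ ↑T.dom ∧ SetSat T (Function.update W (.inr n) Z) φ

lemma sat_iff_setSat {T : UTree A} {v : ℕ → Node} {V : ℕ → Set Node} {φ : MSO A}
    (hv : ∀ n, v n ∈ T.dom) :
    Sat T v V φ ↔ SetSat T (Sum.elim (fun n => {v n}) V) φ := by
  induction φ generalizing v V with
  | eq x y => simp [Sat, SetSat, hv, eq_comm]
  | desc x y => simp [Sat, SetSat]
  | sib x y => simp [Sat, SetSat]
  | lab a x => simp [Sat, SetSat, hv]
  | mem X x => simp [Sat, SetSat, hv]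
  | not φ ih => exact not_congr (ih hv)
  | and φ ψ ihφ ihψ => exact and_congr (ihφ hv) (ihψ hv)
  | exFO n φ ih =>
    refine exists_congr fun s => and_congr_right fun hs => ?_
    rw [ih fun m => ?_, Sum.update_elim_inl]
    · rw [show (fun m => {Function.update v n s m}) = Function.update (fun m => {v m}) n {s} from
        funext fun m => Function.apply_update (fun _ t => ({t} : Set Node)) v n s m]
    · obtain rfl | hmn := eq_or_ne m n
      · simpa using hs
      · simpa [hmn] using hv m
  | exSO n φ ih =>
    refine exists_congr fun Z => and_congr_right fun _ => ?_
    rw [ih hv, Sum.update_elim_inr]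

lemma recognizable_setSat (φ : MSO A) : Recognizable fun T W => SetSat T W φ := by
  induction φ with
  | eq x y => exact .exists_mem_dom_letter fun a => a.2 (Sum.inl x) ∧ a.2 (Sum.inl y)
  | desc x y => exact .exists_descR _ _
  | sib x y => exact .exists_sibR _ _
  | lab a x => exact .exists_mem_dom_letter fun b => b.2 (Sum.inl x) ∧ b.1 = a
  | mem X x => exact .exists_mem_dom_letter fun a => a.2 (Sum.inl x) ∧ a.2 (Sum.inr X)
  | not φ ih => exact ih.not
  | and φ ψ ihφ ihψ => exact ihφ.and ihψ
  | exFO n φ ih => exact ih.exists_mem_dom (.inl n)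
  | exSO n φ ih => exact ih.exists_subset_dom (.inr n)

end MSO

/-- The state reached on the encoding `t` of a part of `T`, where the letter at a node consists
of its label and of the truth value of its membership in `m`. -/
def TreeAlgebra.markedEval {A S : Type} (M : TreeAlgebra (A × Prop) S) (T : UTree A)
    (m : Set Node) (t : BinaryTree Node) : S :=
  M.eval (fun s => (T.label s, s ∈ m)) t

/-- A unary query is recognizable if a finite bottom-up automaton decides it on the encodings
of trees in which the queried node is marked. -/
def RecognizableQuery {A : Type} (Q : UTree A → Set Node) : Prop :=
  ∃ (S : Type) (_ : Finite S) (M : TreeAlgebra (A × Prop) S) (acc : Set S),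
    ∀ T : UTree A, ∀ s ∈ T.dom, (s ∈ Q T ↔ M.markedEval T {s} (T.encode []) ∈ acc)

lemma MSO.DefinesU.recognizableQuery {A : Type} {φ : MSO A} {Q : UTree A → Set Node}
    (h : φ.DefinesU Q) : RecognizableQuery Q := by
  obtain ⟨S, hS, M, acc, hM⟩ := φ.recognizable_setSat
  let expand : A × Prop → A × (ℕ ⊕ ℕ → Prop) := fun a =>
    (a.1, Sum.elim (fun _ => a.2) fun _ => False)
  refine ⟨S, hS, M.comap expand, acc, fun T s hs => ?_⟩
  have hletter : T.letter (Sum.elim (fun _ => {s}) fun _ => ∅) =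
      expand ∘ fun t => (T.label t, t ∈ ({s} : Set Node)) := by
    funext t
    refine Prod.ext rfl (funext fun x => ?_)
    cases x <;> rfl
  rw [h T (fun _ => s) (fun _ => ∅) s hs, Function.update_eq_self (f := fun _ : ℕ => s) 0,
    MSO.sat_iff_setSat fun _ => hs, TreeAlgebra.markedEval, TreeAlgebra.eval_comap, ← hletter]
  exact hM T _

/-! ### From tree automata to datalog -/

/-- The intensional predicates of the program simulating an automaton with states `S`.
`left q` and `right q` say that the automaton, reading no marks, reaches `q` on the forest below
the node and on the forest to its right. `context q` says that the run of the automaton on the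
whole tree is accepting if it reaches `q` on the encoding at the node. -/
inductive StatePred (S : Type) : Type where
  | left : S → StatePred S
  | right : S → StatePred S
  | context : S → StatePred S
  | output : StatePred S

instance {S : Type} [Finite S] : Finite (StatePred S) :=
  Finite.of_surjective (α := S ⊕ S ⊕ S ⊕ Unit)
    (Sum.elim .left (Sum.elim .right (Sum.elim .context fun _ => .output))) <| by
      rintro (q | q | q | _) <;> simp

lemma DRule.closed_iff_forall_pair {A I : Type} {T : UTree A} {X : I → Set Node} {r : DRule A I}
    (hr : ∀ x ∈ r.vars, x = 0 ∨ x = 1) :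
    r.Closed T X ↔ ∀ s ∈ T.dom, ∀ t ∈ T.dom,
      (∀ a ∈ r.body, a.Holds T X fun n => if n = 0 then s else t) →
        (if r.headVar = 0 then s else t) ∈ X r.headPred := by
  constructor
  · intro h s hs t ht
    exact h _ fun n => by split_ifs; exacts [hs, ht]
  · intro h σ hσ hbody
    have heq : ∀ x ∈ r.vars, σ x = if x = 0 then σ 0 else σ 1 := fun x hx => by
      obtain rfl | rfl := hr x hx <;> simp
    rw [heq _ r.headVar_mem_vars]
    exact h _ (hσ 0) _ (hσ 1) ((DRule.body_holds_congr heq).1 hbody)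

namespace TreeAlgebra

open StatePred

variable {A S : Type} {M : TreeAlgebra (A × Prop) S} {acc : Set S} {T : UTree A}
  {X : StatePred S → Set Node} {s t : Node} {m : Set Node}

/-- The rules of the program simulating `M` with the accepting states `acc`. -/
def rules (M : TreeAlgebra (A × Prop) S) (acc : Set S) : Set (DRule A (StatePred S)) :=
  {⟨left M.nil, 0, [.leaf 0], by simp [DAtom.vars]⟩,
    ⟨right M.nil, 0, [.lastChild 0], by simp [DAtom.vars]⟩,
    ⟨right M.nil, 0, [.root 0], by simp [DAtom.vars]⟩} ∪
  Set.range (fun q : acc => ⟨context q, 0, [.root 0], by simp [DAtom.vars]⟩) ∪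
  ⋃ (a : A) (l : S) (r : S),
    {⟨left (M.node (a, False) l r), 0,
        [.fc 0 1, .lab a 1, .idb (left l) 1, .idb (right r) 1], by simp [DAtom.vars]⟩,
      ⟨right (M.node (a, False) l r), 0,
        [.ns 0 1, .lab a 1, .idb (left l) 1, .idb (right r) 1], by simp [DAtom.vars]⟩,
      ⟨context l, 1,
        [.fc 0 1, .lab a 0, .idb (context (M.node (a, False) l r)) 0, .idb (right r) 0],
        by simp [DAtom.vars]⟩,
      ⟨context r, 1,
        [.ns 0 1, .lab a 0, .idb (context (M.node (a, False) l r)) 0, .idb (left l) 0],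
        by simp [DAtom.vars]⟩,
      ⟨output, 0,
        [.lab a 0, .idb (left l) 0, .idb (right r) 0, .idb (context (M.node (a, True) l r)) 0],
        by simp [DAtom.vars]⟩}

lemma finite_rules [Finite A] [Finite S] (M : TreeAlgebra (A × Prop) S) (acc : Set S) :
    (M.rules acc).Finite := by
  unfold rules
  exact Set.toFinite _

/-- The interpretation `X` is closed under the rules of the program simulating `M`. -/
structure IsModel (M : TreeAlgebra (A × Prop) S) (acc : Set S) (T : UTree A)
    (X : StatePred S → Set Node) : Prop where
  left_of_isLeaf {s : Node} : T.isLeaf s → s ∈ X (left M.nil)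
  right_of_lastChildP {s : Node} : DAtom.lastChildP T s → s ∈ X (right M.nil)
  right_nil : [] ∈ X (right M.nil)
  context_nil {q : S} : q ∈ acc → [] ∈ X (context q)
  left_of_firstChildR {s t : Node} {l r : S} : T.firstChildR s t →
    t ∈ X (left l) → t ∈ X (right r) → s ∈ X (left (M.node (T.label t, False) l r))
  right_of_nsR {s t : Node} {l r : S} : T.nsR s t →
    t ∈ X (left l) → t ∈ X (right r) → s ∈ X (right (M.node (T.label t, False) l r))
  context_of_firstChildR {s t : Node} {l r : S} : T.firstChildR s t →
    s ∈ X (context (M.node (T.label s, False) l r)) → s ∈ X (right r) → t ∈ X (context l)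
  context_of_nsR {s t : Node} {l r : S} : T.nsR s t →
    s ∈ X (context (M.node (T.label s, False) l r)) → s ∈ X (left l) → t ∈ X (context r)
  output_of_context {s : Node} {l r : S} : s ∈ T.dom → s ∈ X (left l) → s ∈ X (right r) →
    s ∈ X (context (M.node (T.label s, True) l r)) → s ∈ X output

lemma closed_rules_iff_isModel : (∀ r ∈ M.rules acc, r.Closed T X) ↔ M.IsModel acc T X := by
  change M.rules acc ⊆ {r | r.Closed T X} ↔ _
  simp only [rules, Set.union_subset_iff, Set.insert_subset_iff, Set.singleton_subset_iff,
    Set.iUnion_subset_iff, Set.range_subset_iff, Set.mem_ofPred_eq]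
  simp only [DRule.closed_iff_forall_pair, DRule.vars, DAtom.vars, DAtom.Holds, DAtom.ExtHolds,
    List.flatMap_cons, List.flatMap_nil, List.cons_append, List.nil_append, List.append_nil,
    List.mem_cons, List.not_mem_nil, or_false, or_true, or_self, zero_ne_one, one_ne_zero,
    ↓reduceIte, reduceCtorEq, IsEmpty.forall_iff, implies_true, true_and, and_true, and_self,
    imp_self, and_imp, forall_eq, forall_eq', forall_eq_or_imp, forall_apply_eq_imp_iff,
    DAtom.idb.injEq, Subtype.forall]
  constructor
  · rintro ⟨⟨⟨hleaf, hlast, hroot⟩, hacc⟩, hstep⟩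
    exact
      { left_of_isLeaf := fun h => hleaf _ h.1 _ h.1 h
        right_of_lastChildP := fun h => hlast _ h.1 _ h.1 h
        right_nil := hroot _ T.nil_mem _ T.nil_mem rfl
        context_nil := fun hq => hacc _ hq _ T.nil_mem _ T.nil_mem rfl
        left_of_firstChildR := fun h => (hstep _ _ _).1 _ h.1 _ h.2.1 h h.2.1 rfl
        right_of_nsR := fun h => (hstep _ _ _).2.1 _ h.1 _ h.2.1 h h.2.1 rfl
        context_of_firstChildR := fun h => (hstep _ _ _).2.2.1 _ h.1 _ h.2.1 h h.1 rfl
        context_of_nsR := fun h => (hstep _ _ _).2.2.2.1 _ h.1 _ h.2.1 h h.1 rfl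
        output_of_context := fun hs => (hstep _ _ _).2.2.2.2 _ hs _ hs hs rfl }
  · intro h
    refine ⟨⟨⟨fun _ _ _ _ => h.left_of_isLeaf, fun _ _ _ _ => h.right_of_lastChildP, ?_⟩, ?_⟩,
      fun a l r => ⟨?_, ?_, ?_, ?_, ?_⟩⟩
    · rintro _ - _ - rfl
      exact h.right_nil
    · rintro q hq _ - _ - rfl
      exact h.context_nil hq
    · rintro s - t - hst - rfl
      exact h.left_of_firstChildR hst
    · rintro s - t - hst - rfl
      exact h.right_of_nsR hst
    · rintro s - t - hst - rfl
      exact h.context_of_firstChildR hst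
    · rintro s - t - hst - rfl
      exact h.context_of_nsR hst
    · rintro s hs - - - rfl
      exact h.output_of_context hs

lemma markedEval_encode : M.markedEval T m (T.encode s) =
    M.node (T.label s, s ∈ m) (M.markedEval T m (T.forest s 0))
      (M.markedEval T m (T.rightForest s)) :=
  rfl

lemma markedEval_eq_of_disjoint {t : BinaryTree Node} (h : Disjoint m (vertexSet t)) :
    M.markedEval T m t = M.markedEval T ∅ t :=
  eval_congr fun s hs => by simp [h.notMem_of_mem_right hs]

lemma markedEval_encode_of_subset_forest (hs : s ∈ T.dom) (hm : m ⊆ vertexSet (T.forest s 0)) :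
    M.markedEval T m (T.encode s) =
      M.node (T.label s, False) (M.markedEval T m (T.forest s 0))
        (M.markedEval T ∅ (T.rightForest s)) := by
  obtain ⟨hsl, -, hlr, -⟩ := UTree.nodupVertices_encode hs
  rw [markedEval_encode, markedEval_eq_of_disjoint (hlr.mono_left hm),
    eq_false (Set.notMem_subset hm hsl)]

lemma markedEval_encode_of_subset_rightForest (hs : s ∈ T.dom)
    (hm : m ⊆ vertexSet (T.rightForest s)) :
    M.markedEval T m (T.encode s) =
      M.node (T.label s, False) (M.markedEval T ∅ (T.forest s 0))
        (M.markedEval T m (T.rightForest s)) := by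
  obtain ⟨-, hsr, hlr, -⟩ := UTree.nodupVertices_encode hs
  rw [markedEval_encode, markedEval_eq_of_disjoint (hlr.symm.mono_left hm),
    eq_false (Set.notMem_subset hm hsr)]

lemma markedEval_singleton_encode (hs : s ∈ T.dom) :
    M.markedEval T {s} (T.encode s) =
      M.node (T.label s, True) (M.markedEval T ∅ (T.forest s 0))
        (M.markedEval T ∅ (T.rightForest s)) := by
  obtain ⟨hsl, hsr, -⟩ := UTree.nodupVertices_encode hs
  rw [markedEval_encode, markedEval_eq_of_disjoint (Set.disjoint_singleton_left.2 hsl),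
    markedEval_eq_of_disjoint (Set.disjoint_singleton_left.2 hsr), eq_true (Set.mem_singleton s)]

/-- The intended meaning of the intensional predicates in the program simulating `M`. -/
def intendedModel (M : TreeAlgebra (A × Prop) S) (acc : Set S) (T : UTree A) :
    StatePred S → Set Node
  | left q => {s | M.markedEval T ∅ (T.forest s 0) = q}
  | right q => {s | M.markedEval T ∅ (T.rightForest s) = q}
  | context q => {s | ∀ m ⊆ vertexSet (T.encode s), M.markedEval T m (T.encode s) = q →
      M.markedEval T m (T.encode []) ∈ acc}
  | output => {s | M.markedEval T {s} (T.encode []) ∈ acc}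

lemma isModel_intendedModel : M.IsModel acc T (M.intendedModel acc T) where
  left_of_isLeaf h := congrArg _ (UTree.forest_zero_of_isLeaf h)
  right_of_lastChildP h := congrArg _ (UTree.rightForest_of_lastChildP h)
  right_nil := rfl
  context_nil hq m _ h := h ▸ hq
  left_of_firstChildR := by
    rintro s t _ _ hst rfl rfl
    exact congrArg _ (UTree.forest_zero_of_firstChildR hst)
  right_of_nsR := by
    rintro s t _ _ hst rfl rfl
    exact congrArg _ (UTree.rightForest_of_nsR hst)
  context_of_firstChildR := by
    rintro s t l _ hst hs rfl m hm rfl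
    have hm' : m ⊆ vertexSet (T.forest s 0) := UTree.forest_zero_of_firstChildR hst ▸ hm
    refine hs m (hm'.trans UTree.vertexSet_forest_zero_subset_encode) ?_
    rw [markedEval_encode_of_subset_forest hst.1 hm', UTree.forest_zero_of_firstChildR hst]
  context_of_nsR := by
    rintro s t _ r hst hs rfl m hm rfl
    have hm' : m ⊆ vertexSet (T.rightForest s) := UTree.rightForest_of_nsR hst ▸ hm
    refine hs m (hm'.trans UTree.vertexSet_rightForest_subset_encode) ?_
    rw [markedEval_encode_of_subset_rightForest hst.1 hm', UTree.rightForest_of_nsR hst]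
  output_of_context := by
    rintro s _ _ hs rfl rfl h
    exact h {s} (Set.singleton_subset_iff.2 UTree.mem_vertexSet_encode)
      (markedEval_singleton_encode hs)

lemma IsModel.mem_left_and_mem_right (hX : M.IsModel acc T X) (hs : s ∈ T.dom) :
    s ∈ X (left (M.markedEval T ∅ (T.forest s 0))) ∧
      s ∈ X (right (M.markedEval T ∅ (T.rightForest s))) := by
  refine UTree.bottomUp_induction (fun s hs ihfc ihns => ⟨?_, ?_⟩) hs
  · obtain hleaf | ⟨t, hst⟩ := UTree.isLeaf_or_exists_firstChildR hs
    · rw [UTree.forest_zero_of_isLeaf hleaf]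
      exact hX.left_of_isLeaf hleaf
    · rw [UTree.forest_zero_of_firstChildR hst]
      exact hX.left_of_firstChildR hst (ihfc t hst).1 (ihfc t hst).2
  · obtain rfl | hlast | ⟨t, hst⟩ := UTree.eq_nil_or_lastChildP_or_exists_nsR hs
    · exact hX.right_nil
    · rw [UTree.rightForest_of_lastChildP hlast]
      exact hX.right_of_lastChildP hlast
    · rw [UTree.rightForest_of_nsR hst]
      exact hX.right_of_nsR hst (ihns t hst).1 (ihns t hst).2

lemma IsModel.mem_context (hX : M.IsModel acc T X) (hs : s ∈ T.dom)
    (hm : m ⊆ vertexSet (T.encode s)) (hacc : M.markedEval T m (T.encode []) ∈ acc) :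
    s ∈ X (context (M.markedEval T m (T.encode s))) := by
  revert hm
  refine UTree.topDown_induction (fun _ => hX.context_nil hacc)
    (fun s t hst ih hm => ?_) (fun s t hst ih hm => ?_) hs
  · rw [← UTree.forest_zero_of_firstChildR hst] at hm ⊢
    have hctx := ih (hm.trans UTree.vertexSet_forest_zero_subset_encode)
    rw [markedEval_encode_of_subset_forest hst.1 hm] at hctx
    exact hX.context_of_firstChildR hst hctx (hX.mem_left_and_mem_right hst.1).2
  · rw [← UTree.rightForest_of_nsR hst] at hm ⊢
    have hctx := ih (hm.trans UTree.vertexSet_rightForest_subset_encode)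
    rw [markedEval_encode_of_subset_rightForest hst.1 hm] at hctx
    exact hX.context_of_nsR hst hctx (hX.mem_left_and_mem_right hst.1).1

lemma IsModel.mem_output (hX : M.IsModel acc T X) (hs : s ∈ T.dom)
    (hacc : M.markedEval T {s} (T.encode []) ∈ acc) : s ∈ X output := by
  have hctx := hX.mem_context hs (Set.singleton_subset_iff.2 UTree.mem_vertexSet_encode) hacc
  rw [markedEval_singleton_encode hs] at hctx
  obtain ⟨hleft, hright⟩ := hX.mem_left_and_mem_right hs
  exact hX.output_of_context hs hleft hright hctx

lemma derives_output_iff {P : List (DRule A (StatePred S))} (hP : ∀ r, r ∈ P ↔ r ∈ M.rules acc) :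
    Derives T P output s ↔ s ∈ T.dom ∧ M.markedEval T {s} (T.encode []) ∈ acc := by
  constructor
  · refine fun h => ⟨h.mem_dom, h.mem_of_closed (X := M.intendedModel acc T) fun r hr => ?_⟩
    exact closed_rules_iff_isModel.2 isModel_intendedModel r ((hP r).1 hr)
  · rintro ⟨hs, hacc⟩
    have hmodel : M.IsModel acc T fun i => {t | Derives T P i t} :=
      closed_rules_iff_isModel.1 fun r hr _ => Derives.of_body_holds ((hP r).2 hr)
    exact hmodel.mem_output hs hacc

end TreeAlgebra

theorem RecognizableQuery.exists_derives {A : Type} [Finite A] {Q : UTree A → Set Node}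
    (h : RecognizableQuery Q) (hQ : ∀ T, Q T ⊆ ↑T.dom) :
    ∃ (I : Type) (_ : Finite I) (P : List (DRule A I)) (H : I),
      ∀ T : UTree A, Q T = {s | Derives T P H s} := by
  obtain ⟨S, hS, M, acc, hM⟩ := h
  have hfin : (M.rules acc).Finite := M.finite_rules acc
  refine ⟨StatePred S, inferInstance, hfin.toFinset.toList, .output, fun T => ?_⟩
  ext s
  rw [Set.mem_ofPred_eq, TreeAlgebra.derives_output_iff (M := M) (acc := acc) (by simp)]
  constructor
  · exact fun hs => ⟨hQ T hs, (hM T s (hQ T hs)).1 hs⟩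
  · exact fun ⟨hs, hacc⟩ => (hM T s hs).2 hacc

/-- A unary query over ordered unranked Σ-trees is MSO-definable
iff it is definable in monadic datalog over the extensional predicates
`≺_fc`, `≺_ns`, `Leaf`, `LastChild`, `Root`, and `P_a` (a ∈ Σ). -/
theorem mso_iff_monadic_datalog (A : Type) [Fintype A]
    (Q : UTree A → Set Node) (hQ : ∀ T, Q T ⊆ ↑T.dom) :
    (∃ φ : MSO A, φ.DefinesU Q) ↔
      ∃ (I : Type) (_ : Fintype I) (P : List (DRule A I)) (H : I),
        ∀ T : UTree A, Q T = {s : Node | Derives T P H s} := by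
  constructor
  · rintro ⟨φ, hφ⟩
    obtain ⟨I, hI, P, H, h⟩ := hφ.recognizableQuery.exists_derives hQ
    exact ⟨I, Fintype.ofFinite I, P, H, h⟩
  · rintro ⟨I, _, P, H, h⟩
    obtain ⟨φ, hφ⟩ := exists_definesU_derives P H
    exact ⟨φ, fun T v V s hs => h T ▸ hφ T v V s hs⟩

end UnrankedTrees
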